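/- arXiv:1908.05251 — 4 statements merged into one kernel-verified Lean document; each statement's English description precedes it below -/
import Mathlib

section
/- Let d ≥ 2, let p = (p_1,…,p_d) be a probability vector on d points (p_i ≥ 0, Σ_i p_i = 1), and let α > 0 with α ≠ 1. Suppose some entry of p equals δ with 0 ≤ δ ≤ 1. Then S_α(p) ≤ (1/(1−α))·log( δ^α + (d−1)^{1−α}·(1−δ)^α ), where S_α(p) = (1/(1−α))·log(Σ_{i=1}^d p_i^α). -/
/-!
Split off the entry equal to `δ`; the other `d - 1` entries sum to `1 - δ`. By Jensen's inequality
for `x ↦ x ^ α`, the sum of the `α`-th powers of these entries is at most (for `α < 1`, concave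
case) or at least (for `α > 1`, convex case) its value `(d - 1) ^ (1 - α) * (1 - δ) ^ α` at the
uniform vector. The factor `1 / (1 - α)` changes sign at `α = 1` exactly as the inequality flips, so
monotonicity of `log` gives the same bound in both cases.
-/

open scoped BigOperators

/-- Jensen's inequality for the concave power `x ↦ x ^ α`, in unnormalized form. The companion for
`1 ≤ α` is `Real.rpow_sum_le_const_mul_sum_rpow_of_nonneg`. -/
lemma sum_rpow_le_card_rpow_mul {ι : Type*} (s : Finset ι) (hs : s.Nonempty) (f : ι → ℝ)
    (hf : ∀ i ∈ s, 0 ≤ f i) {α : ℝ} (hα0 : 0 ≤ α) (hα1 : α ≤ 1) :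
    ∑ i ∈ s, f i ^ α ≤ (s.card : ℝ) ^ (1 - α) * (∑ i ∈ s, f i) ^ α := by
  have hn : (0 : ℝ) < s.card := by exact_mod_cast hs.card_pos
  have hJ := (Real.concaveOn_rpow hα0 hα1).le_map_sum (t := s) (w := fun _ => (s.card : ℝ)⁻¹)
    (p := f) (fun _ _ => by positivity) (by simp [hn.ne']) hf
  simp only [smul_eq_mul, ← Finset.mul_sum] at hJ
  rw [Real.mul_rpow (by positivity) (Finset.sum_nonneg hf), inv_mul_le_iff₀ hn,
    Real.inv_rpow hn.le] at hJ
  rwa [Real.rpow_sub hn, Real.rpow_one, div_eq_mul_inv, mul_assoc]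

/-- For a probability vector `p` on `d ≥ 2` points with some entry equal to `δ`,
`0 ≤ δ ≤ 1`, and `α > 0`, `α ≠ 1`, the α-Renyi entropy
`S_α(p) = (1/(1-α)) · log (∑ i, p i ^ α)` is at most the entropy of the
distribution placing weight `δ` on one point and `1-δ` uniformly on the rest:
`S_α(p) ≤ (1/(1-α)) · log (δ^α + (d-1)^(1-α) · (1-δ)^α)`. -/
theorem renyiEntropy_upper_bound_of_entry
    (d : ℕ) (hd : 2 ≤ d) (p : Fin d → ℝ)
    (hp : ∀ i, 0 ≤ p i) (hsum : ∑ i, p i = 1)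
    (δ : ℝ) (hδ0 : 0 ≤ δ) (hδ1 : δ ≤ 1)
    (hentry : ∃ i, p i = δ)
    (α : ℝ) (hα0 : 0 < α) (hα1 : α ≠ 1) :
    (1 / (1 - α)) * Real.log (∑ i, p i ^ α)
      ≤ (1 / (1 - α)) * Real.log (δ ^ α + ((d : ℝ) - 1) ^ (1 - α) * (1 - δ) ^ α) := by
  obtain ⟨j, rfl⟩ := hentry
  set s := Finset.univ.erase j with hs
  have hcard : (s.card : ℝ) = (d : ℝ) - 1 := by
    rw [hs, Finset.card_erase_of_mem (Finset.mem_univ j), Finset.card_univ, Fintype.card_fin,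
      Nat.cast_sub (by omega), Nat.cast_one]
  have hd' : (2 : ℝ) ≤ d := by exact_mod_cast hd
  have hs_ne : s.Nonempty := by
    rw [← Finset.card_pos, ← Nat.cast_pos (α := ℝ), hcard]
    linarith
  have hrest : ∑ i ∈ s, p i = 1 - p j := by
    rw [← hsum, ← Finset.add_sum_erase _ p (Finset.mem_univ j)]
    ring
  have hsplit : ∑ i, p i ^ α = p j ^ α + ∑ i ∈ s, p i ^ α :=
    (Finset.add_sum_erase _ (fun i => p i ^ α) (Finset.mem_univ j)).symm
  have hn : (0 : ℝ) < d - 1 := by linarith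
  have hL : 0 < ∑ i, p i ^ α := by
    obtain ⟨i, -, hi⟩ := Finset.exists_lt_of_sum_lt
      (show ∑ _i : Fin d, (0 : ℝ) < ∑ i, p i by simp [hsum])
    exact Finset.sum_pos' (fun i _ => Real.rpow_nonneg (hp i) α)
      ⟨i, Finset.mem_univ i, Real.rpow_pos_of_pos hi α⟩
  have hR : 0 < p j ^ α + ((d : ℝ) - 1) ^ (1 - α) * (1 - p j) ^ α := by
    have h1 : 0 ≤ 1 - p j := by linarith
    rcases hδ0.eq_or_lt with h | h
    · rw [← h]
      simp only [sub_zero, Real.one_rpow, mul_one]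
      positivity
    · positivity
  rcases lt_or_gt_of_ne hα1 with h | h
  · have hJ := sum_rpow_le_card_rpow_mul s hs_ne p (fun i _ => hp i) hα0.le h.le
    rw [hcard, hrest] at hJ
    refine mul_le_mul_of_nonneg_left (Real.log_le_log hL ?_)
      (one_div_nonneg.mpr (by linarith))
    linarith
  · have hJ := Real.rpow_sum_le_const_mul_sum_rpow_of_nonneg s h.le (fun i _ => hp i)
    rw [hcard, hrest, ← neg_sub 1 α, Real.rpow_neg hn.le,
      ← div_eq_inv_mul, le_div_iff₀' (Real.rpow_pos_of_pos hn _)] at hJ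
    refine mul_le_mul_of_nonpos_left (Real.log_le_log hR ?_)
      (one_div_nonpos.mpr (by linarith))
    linarith
end

section
/- Let U be a d × d complex unitary matrix, let ξ = (1/(2d))·fromBlocks(1, Uᴴ, U, 1), and let H = (1/√2)·[[1,1],[1,−1]] be the Hadamard matrix. Then the probability of measuring outcome 0 on the clean qubit after the final Hadamard is Tr( (fromBlocks(1,0,0,0)) · (H ⊗ 1_d)·ξ·(H ⊗ 1_d) ) = 1/2 + Re(Tr(U))/(2d). -/
/-!
Every operator involved is a 2 × 2 block matrix: `hadamard ⊗ₖ 1` is the block matrix with blocks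
`± s • 1`, `s = 1/√2` (`hadamard_kronecker_one`). Since `qBlocks` respects products
(`qBlocks_mul`) and its trace is the sum of the traces of the diagonal blocks
(`trace_qBlocks`), the left side is `s² (2d)⁻¹ Tr (1 + U + Uᴴ + 1)`, with `s² = 1/2`,
`Tr 1 = d` and `Tr U + Tr Uᴴ = 2 Re (Tr U)`.
-/

open Matrix
open scoped Kronecker

/-- Equivalence identifying the block index `Fin d ⊕ Fin d` with the
qubit ⊗ system index `Fin 2 × Fin d`. -/
def blockIndexEquiv (d : ℕ) : (Fin d ⊕ Fin d) ≃ (Fin 2 × Fin d) :=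
  (Equiv.boolProdEquivSum (Fin d)).symm.trans
    (Equiv.prodCongr finTwoEquiv.symm (Equiv.refl (Fin d)))

/-- The block matrix `fromBlocks A B C D` viewed as a matrix on the
qubit ⊗ system register `Fin 2 × Fin d`. -/
def qBlocks {d : ℕ} (A B C D : Matrix (Fin d) (Fin d) ℂ) :
    Matrix (Fin 2 × Fin d) (Fin 2 × Fin d) ℂ :=
  Matrix.reindex (blockIndexEquiv d) (blockIndexEquiv d) (Matrix.fromBlocks A B C D)

/-- The 2 × 2 Hadamard matrix over ℂ. -/
noncomputable def hadamard : Matrix (Fin 2) (Fin 2) ℂ :=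
  ((Real.sqrt 2 : ℝ) : ℂ)⁻¹ • !![1, 1; 1, -1]

lemma qBlocks_mul {d : ℕ} (A B C D A' B' C' D' : Matrix (Fin d) (Fin d) ℂ) :
    qBlocks A B C D * qBlocks A' B' C' D' =
      qBlocks (A * A' + B * C') (A * B' + B * D') (C * A' + D * C') (C * B' + D * D') := by
  simp only [qBlocks, reindex_apply, submatrix_mul_equiv, fromBlocks_multiply]

lemma trace_qBlocks {d : ℕ} (A B C D : Matrix (Fin d) (Fin d) ℂ) :
    (qBlocks A B C D).trace = A.trace + D.trace := by
  refine ((blockIndexEquiv d).symm.sum_comp fun i => fromBlocks A B C D i i).trans ?_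
  simp [Fintype.sum_sum_type, trace]

lemma hadamard_kronecker_one (d : ℕ) :
    hadamard ⊗ₖ (1 : Matrix (Fin d) (Fin d) ℂ) =
      ((Real.sqrt 2 : ℝ) : ℂ)⁻¹ • qBlocks 1 1 1 (-1) := by
  ext ⟨a, i⟩ ⟨b, j⟩
  fin_cases a <;> fin_cases b <;>
    simp [_root_.hadamard, qBlocks, blockIndexEquiv, finTwoEquiv, Equiv.boolProdEquivSum]

/-- The probability of measuring outcome `0` on the clean qubit after the final
Hadamard of the DQC1 circuit, applied to the state
`ξ = (1/(2d)) · fromBlocks(1, Uᴴ, U, 1)`, equals `1/2 + Re(Tr U)/(2d)`. -/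
theorem dqc1_outcome_probability
    (d : ℕ) (hd : 0 < d) (U : Matrix (Fin d) (Fin d) ℂ) (hU : U * Uᴴ = 1) :
    (qBlocks 1 0 0 0 *
        ((hadamard ⊗ₖ (1 : Matrix (Fin d) (Fin d) ℂ)) *
          ((2 * (d : ℂ))⁻¹ • qBlocks 1 Uᴴ U 1) *
          (hadamard ⊗ₖ (1 : Matrix (Fin d) (Fin d) ℂ)))).trace
      = 1 / 2 + ((U.trace.re : ℂ)) / (2 * d) := by
  have hd' : (d : ℂ) ≠ 0 := Nat.cast_ne_zero.mpr hd.ne'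
  have hs : ((Real.sqrt 2 : ℝ) : ℂ)⁻¹ * ((Real.sqrt 2 : ℝ) : ℂ)⁻¹ = 1 / 2 := by
    rw [← mul_inv, ← Complex.ofReal_mul, Real.mul_self_sqrt zero_le_two]
    norm_num
  have hre : U.trace + star U.trace = 2 * (U.trace.re : ℂ) := by
    simpa using Complex.add_conj U.trace
  rw [hadamard_kronecker_one]
  simp only [smul_mul_assoc, mul_smul_comm, smul_smul, qBlocks_mul, trace_smul, trace_qBlocks,
    one_mul, mul_one, zero_mul, add_zero, trace_zero, trace_add, trace_one, trace_conjTranspose,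
    Fintype.card_fin, smul_eq_mul]
  generalize ((Real.sqrt 2 : ℝ) : ℂ)⁻¹ = s at hs ⊢
  calc _ = (s * s) * (2 * (d : ℂ))⁻¹ * (2 * d + (U.trace + star U.trace)) := by ring
    _ = _ := by
      rw [hs, hre]
      field_simp
end

section
/- Let c be a real number with 3/4 < c ≤ 1, let q ≥ 1 be a natural number, and let x > 0, x_max > 0, ε > 0 be reals satisfying 2^{q−1}·x ≤ 2·x_max (equivalently 2^q ≤ 4·x_max/x; in the application 2^{q−1}·x < 2·x_max holds since x > x_max/2^q). Assume 2^q ≤ 2·x_max/x. Then Σ_{k=1}^∞ c·(1−c)^{k−1}·( 2^{q+k} / (x_max·ε) )² ≤ 16·c / ( (4c−3)·x²·ε² ). -/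
/-!
The `k`-th term equals `4c (2^q / (x_max ε))² · (4(1-c))^k`, so the series is geometric with
ratio `4(1-c) < 1` (this is where `c > 3/4` enters) and sums to
`4c (2^q / (x_max ε))² / (4c - 3)`. The claim follows from `2^q ≤ 2 x_max / x`.
-/

/-- Expected-measurement bound for the iterative multiplicative-approximation
algorithm: for per-round success probability `3/4 < c ≤ 1`, with `q ≥ 1` such
that `2^(q-1)·x ≤ 2·x_max` (indeed `2^q ≤ 2·x_max/x`), the expected total number
of measurements `∑_{k=1}^∞ c·(1-c)^(k-1)·(2^(q+k)/(x_max·ε))²` is at most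
`16·c/((4c-3)·x²·ε²)`. (The sum over `k ≥ 1` is reindexed to start at `0`.) -/
theorem expected_measurements_bound
    (c : ℝ) (hc : 3 / 4 < c) (hc1 : c ≤ 1)
    (q : ℕ) (hq : 1 ≤ q)
    (x xmax ε : ℝ) (hx : 0 < x) (hxmax : 0 < xmax) (hε : 0 < ε)
    (h1 : (2 : ℝ) ^ (q - 1) * x ≤ 2 * xmax)
    (h2 : (2 : ℝ) ^ q ≤ 2 * xmax / x) :
    Summable (fun k : ℕ => c * (1 - c) ^ k * ((2 : ℝ) ^ (q + k + 1) / (xmax * ε)) ^ 2) ∧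
      ∑' k : ℕ, c * (1 - c) ^ k * ((2 : ℝ) ^ (q + k + 1) / (xmax * ε)) ^ 2
        ≤ 16 * c / ((4 * c - 3) * x ^ 2 * ε ^ 2) := by
  have hgeo : HasSum (fun k : ℕ => (4 * (1 - c)) ^ k) (1 - 4 * (1 - c))⁻¹ :=
    hasSum_geometric_of_lt_one (by linarith) (by linarith)
  have hsum := hgeo.mul_left (4 * c * ((2 : ℝ) ^ q / (xmax * ε)) ^ 2)
  have hterm : (fun k : ℕ => c * (1 - c) ^ k * ((2 : ℝ) ^ (q + k + 1) / (xmax * ε)) ^ 2) =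
      fun k : ℕ => 4 * c * ((2 : ℝ) ^ q / (xmax * ε)) ^ 2 * (4 * (1 - c)) ^ k := by
    funext k
    have h4 : (4 : ℝ) ^ k = (2 ^ k) ^ 2 := by
      rw [← pow_mul, mul_comm, pow_mul]
      norm_num
    rw [mul_pow, h4, pow_add, pow_add]
    ring
  rw [hterm]
  refine ⟨hsum.summable, ?_⟩
  rw [hsum.tsum_eq]
  have hd : 0 < 4 * c - 3 := by linarith
  have hratio : (2 : ℝ) ^ q / (xmax * ε) ≤ 2 / (x * ε) := by
    calc (2 : ℝ) ^ q / (xmax * ε) ≤ (2 * xmax / x) / (xmax * ε) := by gcongr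
      _ = 2 / (x * ε) := by field_simp
  have hc0 : 0 < c := by linarith
  have hr : 1 - 4 * (1 - c) = 4 * c - 3 := by ring
  rw [hr]
  calc 4 * c * ((2 : ℝ) ^ q / (xmax * ε)) ^ 2 * (4 * c - 3)⁻¹
      ≤ 4 * c * (2 / (x * ε)) ^ 2 * (4 * c - 3)⁻¹ := by gcongr
    _ = 16 * c / ((4 * c - 3) * x ^ 2 * ε ^ 2) := by
      field_simp
      norm_num
end

section
/- Let a ≥ 1 and s ≥ 1 be natural numbers and let W be a unitary (a·s) × (a·s) complex matrix, indexed by pairs (k, x) with k ∈ Fin a and x ∈ Fin s. Define ψ : Fin a × Fin s → ℂ by ψ(k, x) = W((k,x), (0,0)) (the first column of W, i.e. the purification W|0⟩), and define the s × s matrix ρ by ρ(x, y) = Σ_{k ∈ Fin a} ψ(k, x)·conj(ψ(k, y)) (the partial trace of |ψ⟩⟨ψ| over the ancilla index). Let SWAP be the (s·s) × (s·s) permutation matrix with SWAP((i,j),(k,l)) = 1 if i = l and j = k, and 0 otherwise, and define the ((a·s)·s) × ((a·s)·s) matrix U = (Wᴴ ⊗ 1_s)·(1_a ⊗ SWAP)·(W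 ⊗ 1_s), where the index set (Fin a × Fin s) × Fin s is identified with Fin a × (Fin s × Fin s) for the middle factor. Then for all x, y ∈ Fin s, U( ((0,0), x), ((0,0), y) ) = ρ(x, y); that is, U is an exact unitary block encoding of ρ. -/
open Matrix
open scoped Kronecker

/-- The standard conversion of a purified-access oracle `W` (preparing a
purification `ψ = W|0⟩` of the density matrix `ρ = Tr_ancilla |ψ⟩⟨ψ|`) into an
exact unitary block encoding of `ρ`: writing
`U = (Wᴴ ⊗ 1)·(1 ⊗ SWAP)·(W ⊗ 1)`, the entries of `U` with both ancilla
registers in the all-zero state reproduce the entries of `ρ`. -/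
theorem purified_access_block_encoding
    (a s : ℕ) (ha : 1 ≤ a) (hs : 1 ≤ s)
    (W : Matrix (Fin a × Fin s) (Fin a × Fin s) ℂ) (hW : W * Wᴴ = 1) :
    ∀ x y : Fin s,
      (((Wᴴ ⊗ₖ (1 : Matrix (Fin s) (Fin s) ℂ)) *
          (Matrix.reindex (Equiv.prodAssoc (Fin a) (Fin s) (Fin s)).symm
              (Equiv.prodAssoc (Fin a) (Fin s) (Fin s)).symm
              ((1 : Matrix (Fin a) (Fin a) ℂ) ⊗ₖ
                (Matrix.of fun p q : Fin s × Fin s =>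
                  if p.1 = q.2 ∧ p.2 = q.1 then (1 : ℂ) else 0))) *
          (W ⊗ₖ (1 : Matrix (Fin s) (Fin s) ℂ)))
        (((⟨0, ha⟩ : Fin a), (⟨0, hs⟩ : Fin s)), x)
        (((⟨0, ha⟩ : Fin a), (⟨0, hs⟩ : Fin s)), y))
      = ∑ k : Fin a,
          W (k, x) ((⟨0, ha⟩ : Fin a), (⟨0, hs⟩ : Fin s)) *
            star (W (k, y) ((⟨0, ha⟩ : Fin a), (⟨0, hs⟩ : Fin s))) := by
  intro x y
  generalize ((⟨0, ha⟩ : Fin a), (⟨0, hs⟩ : Fin s)) = z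
  -- The identity factors pin the last register to `x` on the left and `y` on the right;
  -- SWAP then forces the system index to be `y` in `Wᴴ` and `x` in `W`.
  simp only [Matrix.mul_apply, Fintype.sum_prod_type, Matrix.kroneckerMap_apply,
    Matrix.one_apply, Matrix.reindex_apply, Matrix.submatrix_apply, Matrix.of_apply,
    Equiv.symm_symm, Equiv.prodAssoc_apply, Matrix.conjTranspose_apply, ite_and]
  simp [mul_comm]
end
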